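/- arXiv:1401.5846 — 4 statements merged into one kernel-verified Lean document; each statement's English description precedes it below -/
import Mathlib

section
/- Let φ be a diamond-free trimodal formula in negation normal form whose propositional variables are among p_1, …, p_k, and let q be a propositional variable not among them. For each i, let p_i^v = □_1□_2^i q and (¬p_i)^v = □_1□_2^i ¬q (where □_2^i denotes i iterations of □_2), and let φ' be the result of replacing every literal occurrence of p_i in φ by p_i^v and every literal occurrence of ¬p_i by (¬p_i)^v. Then φ' is diamond-free, uses only the variable q, and φ is D2⊕⊆KF-satisfiable if and only if φ' is D2⊕⊆KF-satisfiable. -/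
/-!
A diamond-free formula that holds somewhere in a model holds at the root of the full binary tree:
choosing an `R_1`- and an `R_2`-successor of every world unravels the model into a homomorphism from
the tree, and truth of diamond-free formulas pulls back along homomorphisms (`sat_pullback`,
`treeSat_of_D2KFSat`).  On the tree `R_1` and `R_2` are functions, so `□_1□_2^i` means "at the node
reached by one step along `R_1` and `i` steps along `R_2`".  Since `(i, v) ↦ v01^i` is injective
(`mark_inj`), the valuation of `q` can be prescribed independently at these nodes, so valuations of
the `p_i` can be encoded by a valuation of `q`, and decoded from it, without changing truth
(`sat_oneVar_iff`).
-/

/-- Multimodal formulas in negation normal form over modality index type `I`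
and propositional-variable type `P`. -/
inductive MF (I : Type) (P : Type) : Type where
  | var  : P → MF I P
  | nvar : P → MF I P
  | bot  : MF I P
  | top  : MF I P
  | and  : MF I P → MF I P → MF I P
  | or   : MF I P → MF I P → MF I P
  | box  : I → MF I P → MF I P
  | dia  : I → MF I P → MF I P

/-- Truth of a formula at a world of a Kripke model `(W, R, V)`. -/
def Sat {I P W : Type} (R : I → W → W → Prop) (V : P → Set W) : W → MF I P → Prop
  | w, .var p  => w ∈ V p
  | w, .nvar p => w ∉ V p
  | _, .bot    => False
  | _, .top    => True
  | w, .and φ ψ => Sat R V w φ ∧ Sat R V w ψ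
  | w, .or φ ψ  => Sat R V w φ ∨ Sat R V w ψ
  | w, .box i φ => ∀ v, R i w v → Sat R V v φ
  | w, .dia i φ => ∃ v, R i w v ∧ Sat R V v φ

/-- A formula is diamond-free if it contains no diamond operators. -/
def DiamondFree {I P : Type} : MF I P → Prop
  | .var _ | .nvar _ | .bot | .top => True
  | .and φ ψ | .or φ ψ => DiamondFree φ ∧ DiamondFree ψ
  | .box _ φ => DiamondFree φ
  | .dia _ _ => False

/-- A relation is serial if every point has a successor. -/
def Serial {W : Type} (R : W → W → Prop) : Prop := ∀ w, ∃ v, R w v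

/-- The propositional variables occurring (positively or negatively) in a formula. -/
def fvars {I P : Type} : MF I P → Set P
  | .var p | .nvar p => {p}
  | .bot | .top => ∅
  | .and φ ψ | .or φ ψ => fvars φ ∪ fvars ψ
  | .box _ φ | .dia _ φ => fvars φ

/-- `n` iterations of the box operator of modality `i`. -/
def iterBox {I P : Type} (i : I) : ℕ → MF I P → MF I P
  | 0, φ => φ
  | n + 1, φ => .box i (iterBox i n φ)

/-- Replace each literal `p_i` by `□_1□_2^i q` and `¬p_i` by `□_1□_2^i ¬q`. -/
def oneVar (q : ℕ) : MF (Fin 3) ℕ → MF (Fin 3) ℕ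
  | .var p  => .box 0 (iterBox 1 p (.var q))
  | .nvar p => .box 0 (iterBox 1 p (.nvar q))
  | .bot    => .bot
  | .top    => .top
  | .and φ ψ => .and (oneVar q φ) (oneVar q ψ)
  | .or φ ψ  => .or (oneVar q φ) (oneVar q ψ)
  | .box i φ => .box i (oneVar q φ)
  | .dia i φ => .dia i (oneVar q φ)

/-- `D2⊕⊆KF`-satisfiability. -/
def D2KFSat (φ : MF (Fin 3) ℕ) : Prop :=
  ∃ (W : Type) (R : Fin 3 → W → W → Prop) (V : ℕ → Set W) (w : W),
    Serial (R 0) ∧ Serial (R 1) ∧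
    (∀ a b, R 0 a b ∨ R 1 a b → R 2 a b) ∧
    Transitive (R 2) ∧
    Sat R V w φ

/-- The accessibility relations of the full binary tree.  Nodes are words over `Bool` written with
the last letter first, so the two children of `u` are `false :: u` and `true :: u`; the third
relation is "proper descendant". -/
def treeRel (i : Fin 3) (u v : List Bool) : Prop :=
  match i with
  | 0 => v = false :: u
  | 1 => v = true :: u
  | 2 => ∃ s : List Bool, s ≠ [] ∧ v = s ++ u

/-- The node reached from `v` by one step along the first relation and `n` steps along the
second. -/
def mark (n : ℕ) (v : List Bool) : List Bool := List.replicate n true ++ false :: v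

theorem mark_inj {m n : ℕ} {u v : List Bool} (h : mark m u = mark n v) : m = n ∧ u = v := by
  induction m generalizing n with
  | zero => cases n <;> simp_all [mark, List.replicate_succ]
  | succ m ih =>
    cases n with
    | zero => simp [mark, List.replicate_succ] at h
    | succ n =>
      have h' : mark m u = mark n v := by
        simpa [mark, List.replicate_succ] using h
      obtain ⟨rfl, rfl⟩ := ih h'
      exact ⟨rfl, rfl⟩

/-- Satisfiability at the root of the full binary tree. -/
def TreeSat (φ : MF (Fin 3) ℕ) : Prop := ∃ V : ℕ → Set (List Bool), Sat treeRel V [] φ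

theorem TreeSat.D2KFSat {φ : MF (Fin 3) ℕ} (h : TreeSat φ) : D2KFSat φ := by
  obtain ⟨V, hV⟩ := h
  refine ⟨List Bool, treeRel, V, [], fun w => ⟨_, rfl⟩, fun w => ⟨_, rfl⟩, ?_, ?_, hV⟩
  · rintro a b (rfl | rfl)
    · exact ⟨[false], by simp, rfl⟩
    · exact ⟨[true], by simp, rfl⟩
  · rintro a b c ⟨s, hs, rfl⟩ ⟨t, ht, rfl⟩
    exact ⟨t ++ s, by simp [hs], by simp⟩

/-- Without diamonds, truth only has to be checked along the images of edges, so it is reflected by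
relation-preserving maps. -/
theorem sat_pullback {I P W U : Type} {R : I → W → W → Prop} {S : I → U → U → Prop}
    (V : P → Set W) (h : U → W) (hh : ∀ i u v, S i u v → R i (h u) (h v))
    (φ : MF I P) (hdf : DiamondFree φ) (u : U) (hs : Sat R V (h u) φ) :
    Sat S (fun p => h ⁻¹' V p) u φ := by
  induction φ generalizing u with
  | var p => exact hs
  | nvar p => exact hs
  | bot => exact hs
  | top => trivial
  | and φ ψ ihφ ihψ => exact ⟨ihφ hdf.1 u hs.1, ihψ hdf.2 u hs.2⟩
  | or φ ψ ihφ ihψ => exact hs.imp (ihφ hdf.1 u) (ihψ hdf.2 u)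
  | box i φ ih => exact fun v hv => ih hdf v (hs _ (hh i u v hv))
  | dia i φ ih => exact hdf.elim

/-- The world reached from `w` by following a word, with `f` and `g` as the two successor
functions. -/
def follow {W : Type} (f g : W → W) (w : W) : List Bool → W
  | [] => w
  | false :: u => f (follow f g w u)
  | true :: u => g (follow f g w u)

theorem treeSat_of_D2KFSat {φ : MF (Fin 3) ℕ} (hdf : DiamondFree φ) (h : D2KFSat φ) :
    TreeSat φ := by
  obtain ⟨W, R, V, w, h0, h1, hsub, htr, hs⟩ := h
  choose f hf using h0
  choose g hg using h1
  refine ⟨_, sat_pullback V (follow f g w) ?_ φ hdf [] hs⟩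
  have step : ∀ b u, R 2 (follow f g w u) (follow f g w (b :: u)) := by
    rintro (_ | _) u
    · exact hsub _ _ (Or.inl (hf _))
    · exact hsub _ _ (Or.inr (hg _))
  have desc : ∀ s u, s ≠ [] → R 2 (follow f g w u) (follow f g w (s ++ u)) := by
    intro s u hne
    induction s with
    | nil => exact absurd rfl hne
    | cons b s ih =>
      rcases eq_or_ne s [] with rfl | hs'
      · exact step b u
      · exact htr (ih hs') (step b (s ++ u))
  intro i u v huv
  match i, huv with
  | 0, huv => obtain rfl := huv; exact hf _
  | 1, huv => obtain rfl := huv; exact hg _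
  | 2, huv => obtain ⟨s, hne, rfl⟩ := huv; exact desc s u hne

theorem sat_iterBox (V : ℕ → Set (List Bool)) (n : ℕ) (ψ : MF (Fin 3) ℕ) (u : List Bool) :
    Sat treeRel V u (iterBox 1 n ψ) ↔ Sat treeRel V (List.replicate n true ++ u) ψ := by
  induction n generalizing u with
  | zero => rfl
  | succ n ih =>
    rw [show List.replicate (n + 1) true ++ u = List.replicate n true ++ true :: u by
      simp [List.replicate_succ'], ← ih]
    exact ⟨fun h => h _ rfl, by rintro h _ rfl; exact h⟩

theorem sat_box_iterBox (V : ℕ → Set (List Bool)) (n : ℕ) (ψ : MF (Fin 3) ℕ) (u : List Bool) :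
    Sat treeRel V u (.box 0 (iterBox 1 n ψ)) ↔ Sat treeRel V (mark n u) ψ := by
  rw [mark, ← sat_iterBox]
  exact ⟨fun h => h _ rfl, by rintro h _ rfl; exact h⟩

/-- If `V'` encodes at the marked nodes the valuation `V`, then `oneVar` preserves truth. -/
theorem sat_oneVar_iff (q : ℕ) (V V' : ℕ → Set (List Bool))
    (hV : ∀ p u, u ∈ V p ↔ mark p u ∈ V' q) (φ : MF (Fin 3) ℕ) (u : List Bool) :
    Sat treeRel V u φ ↔ Sat treeRel V' u (oneVar q φ) := by
  induction φ generalizing u with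
  | var p => exact (hV p u).trans (sat_box_iterBox V' p (.var q) u).symm
  | nvar p => exact (hV p u).not.trans (sat_box_iterBox V' p (.nvar q) u).symm
  | bot => rfl
  | top => rfl
  | and φ ψ ihφ ihψ => exact and_congr (ihφ u) (ihψ u)
  | or φ ψ ihφ ihψ => exact or_congr (ihφ u) (ihψ u)
  | box i φ ih => exact forall_congr' fun v => imp_congr_right fun _ => ih v
  | dia i φ ih => exact exists_congr fun v => and_congr_right fun _ => ih v

theorem treeSat_oneVar_iff (q : ℕ) (φ : MF (Fin 3) ℕ) : TreeSat φ ↔ TreeSat (oneVar q φ) := by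
  constructor
  · rintro ⟨V, hs⟩
    refine ⟨fun _ => {x | ∃ p v, x = mark p v ∧ v ∈ V p}, (sat_oneVar_iff q V _ ?_ φ []).1 hs⟩
    refine fun p u => ⟨fun h => ⟨p, u, rfl, h⟩, ?_⟩
    rintro ⟨p', v, he, hv⟩
    obtain ⟨rfl, rfl⟩ := mark_inj he
    exact hv
  · rintro ⟨V', hs⟩
    exact ⟨fun p => {u | mark p u ∈ V' q}, (sat_oneVar_iff q _ V' (fun _ _ => Iff.rfl) φ []).2 hs⟩

theorem diamondFree_iterBox {I P : Type} (i : I) (n : ℕ) {ψ : MF I P} (h : DiamondFree ψ) :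
    DiamondFree (iterBox i n ψ) := by
  induction n with
  | zero => exact h
  | succ n ih => exact ih

theorem fvars_iterBox {I P : Type} (i : I) (n : ℕ) (ψ : MF I P) :
    fvars (iterBox i n ψ) = fvars ψ := by
  induction n with
  | zero => rfl
  | succ n ih => exact ih

theorem diamondFree_oneVar (q : ℕ) (φ : MF (Fin 3) ℕ) (h : DiamondFree φ) :
    DiamondFree (oneVar q φ) := by
  induction φ with
  | var p => exact diamondFree_iterBox 1 p (ψ := .var q) trivial
  | nvar p => exact diamondFree_iterBox 1 p (ψ := .nvar q) trivial
  | bot => trivial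
  | top => trivial
  | and φ ψ ihφ ihψ => exact ⟨ihφ h.1, ihψ h.2⟩
  | or φ ψ ihφ ihψ => exact ⟨ihφ h.1, ihψ h.2⟩
  | box i φ ih => exact ih h
  | dia i φ ih => exact h.elim

theorem fvars_oneVar (q : ℕ) (φ : MF (Fin 3) ℕ) : fvars (oneVar q φ) ⊆ {q} := by
  induction φ with
  | var p => exact (fvars_iterBox 1 p (.var q)).subset
  | nvar p => exact (fvars_iterBox 1 p (.nvar q)).subset
  | bot => exact Set.empty_subset _
  | top => exact Set.empty_subset _
  | and φ ψ ihφ ihψ => exact Set.union_subset ihφ ihψ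
  | or φ ψ ihφ ihψ => exact Set.union_subset ihφ ihψ
  | box i φ ih => exact ih
  | dia i φ ih => exact ih

/-- For a diamond-free trimodal NNF formula `φ` with variables among
`p_1, …, p_k` and a fresh variable `q`, the translation `φ'` replacing each
literal `p_i` by `□_1□_2^i q` (and `¬p_i` by `□_1□_2^i ¬q`) is diamond-free, uses
only the variable `q`, and is D2⊕⊆KF-satisfiable iff `φ` is. -/
theorem stmt_6 (φ : MF (Fin 3) ℕ) (hdf : DiamondFree φ) (k q : ℕ)
    (hvars : ∀ p ∈ fvars φ, 1 ≤ p ∧ p ≤ k)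
    (hq : q ∉ Set.Icc 1 k) :
    DiamondFree (oneVar q φ) ∧ fvars (oneVar q φ) ⊆ {q} ∧
    (D2KFSat φ ↔ D2KFSat (oneVar q φ)) := by
  have hdf' := diamondFree_oneVar q φ hdf
  exact ⟨hdf', fvars_oneVar q φ,
    fun h => ((treeSat_oneVar_iff q φ).1 (treeSat_of_D2KFSat hdf h)).D2KFSat,
    fun h => ((treeSat_oneVar_iff q φ).2 (treeSat_of_D2KFSat hdf' h)).D2KFSat⟩
end

section
/- A diamond-free bimodal formula φ in negation normal form is D⊕⊆KF-satisfiable if and only if there is a valuation V on the natural numbers such that M, 0 ⊨ φ, where M = (ℕ, R_1, R_2, V) with R_1 = {(n, n+1) : n ∈ ℕ} and R_2 = {(n, m) : n < m}. -/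
/-- `D⊕⊆KF`-satisfiability: `R 0` serial, `R 0 ⊆ R 1`, `R 1` transitive. -/
def DKFSat (φ : MF (Fin 2) ℕ) : Prop :=
  ∃ (W : Type) (R : Fin 2 → W → W → Prop) (V : ℕ → Set W) (w : W),
    Serial (R 0) ∧ (∀ a b, R 0 a b → R 1 a b) ∧ Transitive (R 1) ∧
    Sat R V w φ

/-- Truth of diamond-free formulas pulls back along any relation-preserving map, the valuation being
pulled back as well: without diamonds, no back condition on the map is needed. -/
theorem sat_preimage_of_diamondFree {I P W W' : Type} {R : I → W → W → Prop}
    {R' : I → W' → W' → Prop} (V : P → Set W) (f : W' → W)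
    (hf : ∀ i a b, R' i a b → R i (f a) (f b)) (φ : MF I P) (hdf : DiamondFree φ) (a : W')
    (h : Sat R V (f a) φ) : Sat R' (fun p => f ⁻¹' V p) a φ := by
  induction φ generalizing a with
  | var p => exact h
  | nvar p => exact h
  | bot => exact h
  | top => trivial
  | and φ ψ ihφ ihψ => exact ⟨ihφ hdf.1 a h.1, ihψ hdf.2 a h.2⟩
  | or φ ψ ihφ ihψ => exact h.imp (ihφ hdf.1 a) (ihψ hdf.2 a)
  | box i φ ih => exact fun b hb => ih hdf b (h (f b) (hf i a b hb))
  | dia i φ ih => exact hdf.elim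

/-- A diamond-free bimodal NNF formula is D⊕⊆KF-satisfiable iff it
is satisfied at `0` in the model `(ℕ, successor, <)` under some valuation. -/
theorem stmt_8 (φ : MF (Fin 2) ℕ) (hdf : DiamondFree φ) :
    DKFSat φ ↔
      ∃ V : ℕ → Set ℕ,
        Sat (![fun n m => m = n + 1, fun n m => n < m]) V 0 φ := by
  constructor
  · rintro ⟨W, R, V, w, hser, hsub, htrans, hsat⟩
    choose s hs using hser
    let f : ℕ → W := fun n => Nat.rec w (fun _ x => s x) n
    have hstep : ∀ n, R 0 (f n) (f (n + 1)) := fun n => hs (f n)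
    have hlt : ∀ n m, n < m → R 1 (f n) (f m) := by
      intro n m hnm
      induction m, hnm using Nat.le_induction with
      | base => exact hsub _ _ (hstep n)
      | succ m _ ih => exact htrans ih (hsub _ _ (hstep m))
    refine ⟨fun p => f ⁻¹' V p, sat_preimage_of_diamondFree V f ?_ φ hdf 0 hsat⟩
    intro i a b hab
    fin_cases i
    · obtain rfl : b = a + 1 := hab
      exact hstep a
    · exact hlt a b hab
  · rintro ⟨V, hV⟩
    refine ⟨ℕ, _, V, 0, fun n => ⟨n + 1, rfl⟩, ?_, ?_, hV⟩
    · intro a b hab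
      obtain rfl : b = a + 1 := hab
      exact Nat.lt_succ_self a
    · intro a b c hab hbc
      exact Nat.lt_trans hab hbc
end

section
/- Let (N, ⊂, F) be a multimodal logic specification and suppose there are an agent x and a set A ⊆ N such that every ⊂-minimal agent belongs to {x} ∪ A, F(x) ∈ {DF, S5}, and F(j) ∈ {T, S5} for every j ∈ A. Then a diamond-free multimodal NNF formula is (N, ⊂, F)-satisfiable if and only if it is satisfiable in an (N, ⊂, F)-model having at most two worlds. -/
/-- The base modal logics assigned to agents. -/
inductive ML : Type
  | D | T | DF | S5

/-- The frame condition that each base logic imposes on an accessibility relation. -/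
def RelCond {W : Type} : ML → (W → W → Prop) → Prop
  | .D, R  => Serial R
  | .T, R  => Reflexive R
  | .DF, R => Serial R ∧ Transitive R
  | .S5, R => Equivalence R

/-- `(N, ⊂, F)`-satisfiability: satisfiable in a model over a frame in which each
`R i` satisfies the condition of `F i` and `R j ⊆ R i` whenever `j ⊂ i`. -/
def SpecSat {N : Type} (sub : N → N → Prop) (F : N → ML) (φ : MF N ℕ) : Prop :=
  ∃ (W : Type) (R : N → W → W → Prop) (V : ℕ → Set W) (w : W),
    (∀ i, RelCond (F i) (R i)) ∧
    (∀ j i, sub j i → ∀ a b, R j a b → R i a b) ∧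
    Sat R V w φ

/-- The list of all subformulas, the formula itself included. -/
def subformulas {I P : Type} : MF I P → List (MF I P)
  | .and φ ψ => .and φ ψ :: (subformulas φ ++ subformulas ψ)
  | .or φ ψ => .or φ ψ :: (subformulas φ ++ subformulas ψ)
  | .box i φ => .box i φ :: subformulas φ
  | .dia i φ => .dia i φ :: subformulas φ
  | φ => [φ]

theorem self_mem_subformulas {I P : Type} (φ : MF I P) : φ ∈ subformulas φ := by
  cases φ <;> simp [subformulas]

/-- The two-world collapse: `false` stands for `g false`, `true` for `g true`; relations are pulled
back along `g`, and every agent gets a loop at `true`. -/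
def collapse {I W : Type} (R : I → W → W → Prop) (g : Bool → W) (i : I) (a b : Bool) : Prop :=
  R i (g a) (g b) ∨ (a = true ∧ b = true)

/-- Diamond-free truth passes to the collapse when, for each agent, `g true` sees itself or sees
`u'`, where every subformula of `φ` true at `u'` is also true at `g true`. -/
theorem sat_collapse {I P W : Type} (R : I → W → W → Prop) (V : P → Set W) (g : Bool → W) (u' : W)
    (hloop : ∀ i, R i (g true) (g true) ∨ R i (g true) u') (φ : MF I P) :
    DiamondFree φ → (∀ χ ∈ subformulas φ, Sat R V u' χ → Sat R V (g true) χ) →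
    ∀ a, Sat R V (g a) φ → Sat (collapse R g) (fun p => g ⁻¹' V p) a φ := by
  induction φ with
  | var p => exact fun _ _ _ h => h
  | nvar p => exact fun _ _ _ h => h
  | bot => exact fun _ _ _ h => h
  | top => exact fun _ _ _ h => h
  | and φ ψ ihφ ihψ =>
    intro hdf hs a h
    exact ⟨ihφ hdf.1 (fun χ hχ => hs χ (by simp [subformulas, hχ])) a h.1,
      ihψ hdf.2 (fun χ hχ => hs χ (by simp [subformulas, hχ])) a h.2⟩
  | or φ ψ ihφ ihψ =>
    intro hdf hs a h
    exact h.imp (ihφ hdf.1 (fun χ hχ => hs χ (by simp [subformulas, hχ])) a)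
      (ihψ hdf.2 (fun χ hχ => hs χ (by simp [subformulas, hχ])) a)
  | box i φ ih =>
    intro hdf hs a h b hab
    have hs' : ∀ χ ∈ subformulas φ, Sat R V u' χ → Sat R V (g true) χ :=
      fun χ hχ => hs χ (by simp [subformulas, hχ])
    apply ih hdf hs'
    rcases hab with hab | ⟨rfl, rfl⟩
    · exact h _ hab
    · rcases hloop i with hi | hi
      · exact h _ hi
      · exact hs' φ (self_mem_subformulas φ) (h _ hi)
  | dia i φ ih => exact fun hdf => hdf.elim

/-- Each agent's relation is reflexive or contains `R x`, since it contains the relation of a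
minimal agent. -/
theorem refl_or_contains {N W : Type} [Finite N] (sub : N → N → Prop)
    (htrans : Transitive sub) (hirr : Irreflexive sub) (F : N → ML) (x : N) (A : Set N)
    (hmin : ∀ i, (∀ j, ¬ sub j i) → i = x ∨ i ∈ A)
    (hFA : ∀ j ∈ A, F j = ML.T ∨ F j = ML.S5)
    (R : N → W → W → Prop) (hR : ∀ i, RelCond (F i) (R i))
    (hsub : ∀ j i, sub j i → ∀ a b, R j a b → R i a b) (i : N) :
    (∀ a, R i a a) ∨ (∀ a b, R x a b → R i a b) := by
  have : IsTrans N sub := ⟨fun _ _ _ h h' => htrans h h'⟩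
  have : Std.Irrefl sub := ⟨hirr⟩
  have wf : WellFounded sub := Finite.wellFounded_of_trans_of_irrefl sub
  induction i using wf.induction with
  | _ i ih =>
    by_cases hi : ∃ j, sub j i
    · obtain ⟨j, hj⟩ := hi
      exact (ih j hj).imp (fun h a => hsub j i hj _ _ (h a))
        (fun h a b hab => hsub j i hj _ _ (h a b hab))
    · rcases hmin i (not_exists.mp hi) with rfl | hA
      · exact .inr fun _ _ h => h
      · left
        have h := hR i
        rcases hFA i hA with hF | hF <;> rw [hF] at h
        · exact h
        · exact h.refl

/-- In a serial transitive relation, every `w` has successors `u`, `u'` with `r u u'` such that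
`u` satisfies every formula of the finite list `L` that `u'` satisfies. -/
theorem exists_repeat {I P W : Type} (R : I → W → W → Prop) (V : P → Set W)
    (r : W → W → Prop) (hser : Serial r) (htr : Transitive r) (w : W) (L : List (MF I P)) :
    ∃ u u', r w u ∧ r u u' ∧ ∀ χ ∈ L, Sat R V u' χ → Sat R V u χ := by
  choose f hf using hser
  have hchain : ∀ {m n : ℕ}, m < n → r (f^[m] w) (f^[n] w) := by
    have : IsTrans W r := ⟨fun _ _ _ h h' => htr h h'⟩
    intro m n hmn
    refine Nat.rel_of_forall_rel_succ_of_lt r (f := fun n => f^[n] w) (fun n => ?_) hmn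
    simp only [Function.iterate_succ_apply']
    exact hf _
  have : Finite {χ // χ ∈ L} := (List.finite_toSet L).to_subtype
  obtain ⟨m, n, hne, heq⟩ := Finite.exists_ne_map_eq_of_infinite
    (fun (k : ℕ) (χ : {χ // χ ∈ L}) => Sat R V (f^[k + 1] w) χ.1)
  wlog hmn : m < n generalizing m n
  · exact this n m hne.symm heq.symm (by omega)
  exact ⟨f^[m + 1] w, f^[n + 1] w, hchain (m := 0) (by omega), hchain (by omega),
    fun χ hχ h => (congrFun heq ⟨χ, hχ⟩).mpr h⟩

/-- If every `⊂`-minimal agent lies in `{x} ∪ A` where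
`F x ∈ {DF, S5}` and `F j ∈ {T, S5}` for every `j ∈ A`, then a diamond-free NNF
formula is `(N, ⊂, F)`-satisfiable iff it is satisfiable in an `(N, ⊂, F)`-model
with at most two worlds. -/
theorem stmt_15 {N : Type} [Fintype N] [Nonempty N]
    (sub : N → N → Prop) (htrans : Transitive sub) (hirr : Irreflexive sub)
    (F : N → ML) (x : N) (A : Set N)
    (hmin : ∀ i, (∀ j, ¬ sub j i) → i = x ∨ i ∈ A)
    (hFx : F x = ML.DF ∨ F x = ML.S5)
    (hFA : ∀ j ∈ A, F j = ML.T ∨ F j = ML.S5)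
    (φ : MF N ℕ) (hdf : DiamondFree φ) :
    SpecSat sub F φ ↔
      ∃ (W : Type) (R : N → W → W → Prop) (V : ℕ → Set W) (w : W),
        (∃ u v : W, ∀ t : W, t = u ∨ t = v) ∧
        (∀ i, RelCond (F i) (R i)) ∧
        (∀ j i, sub j i → ∀ a b, R j a b → R i a b) ∧
        Sat R V w φ := by
  constructor
  swap
  · rintro ⟨W, R, V, w, -, hR, hsub, h⟩
    exact ⟨W, R, V, w, hR, hsub, h⟩
  rintro ⟨W, R, V, w, hR, hsub, h⟩
  have hx : Serial (R x) ∧ Transitive (R x) := by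
    have h := hR x
    rcases hFx with hF | hF <;> rw [hF] at h
    · exact h
    · exact ⟨fun a => ⟨a, h.refl a⟩, fun _ _ _ h₁ h₂ => h.trans h₁ h₂⟩
  have hcov := refl_or_contains sub htrans hirr F x A hmin hFA R hR hsub
  obtain ⟨u, u', hwu, huu', hagree⟩ :=
    exists_repeat R V (R x) hx.1 hx.2 w (subformulas φ)
  let g : Bool → W := fun b => if b then u else w
  have hser : ∀ i, Serial (collapse R g i) := by
    rintro i (_ | _)
    · rcases hcov i with hi | hi
      · exact ⟨false, .inl (hi _)⟩
      · exact ⟨true, .inl (hi _ _ hwu)⟩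
    · exact ⟨true, .inr ⟨rfl, rfl⟩⟩
  have htr : ∀ i, Transitive (R i) → Transitive (collapse R g i) := by
    rintro i hi a b c (hab | ⟨rfl, rfl⟩) (hbc | ⟨hb, rfl⟩)
    · exact .inl (hi hab hbc)
    · subst hb
      exact .inl hab
    · exact .inl hbc
    · exact .inr ⟨rfl, rfl⟩
  refine ⟨Bool, collapse R g, fun p => g ⁻¹' V p, false, ⟨false, true, by simp⟩, ?_, ?_, ?_⟩
  · intro i
    have hi := hR i
    cases hF : F i <;> rw [hF] at hi
    · exact hser i
    · exact fun a => .inl (hi _)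
    · exact ⟨hser i, htr i hi.2⟩
    · have ht := htr i fun _ _ _ h₁ h₂ => hi.trans h₁ h₂
      exact ⟨fun a => .inl (hi.refl _), fun hab => hab.imp hi.symm And.symm,
        fun h₁ h₂ => ht h₁ h₂⟩
  · exact fun j i hji a b hab => hab.imp_left (hsub j i hji _ _)
  · exact sat_collapse R V g u'
      (fun i => (hcov i).imp (fun hi => hi _) (fun hi => hi _ _ huu')) φ hdf hagree false h
end

section
/- Let C be the class of frames (W, R_x, R_y, R_j, R_i) in which R_x and R_y are serial and transitive, R_j is serial, and R_x ∪ R_y ⊆ R_i. Define □_{(1)} = □_x□_j, □_{(2)} = □_y□_j, and □_{(3)} = □_i□_j, and for a diamond-free trimodal NNF formula φ let φ^{m} be the result of recursively replacing each occurrence of □_k (k = 1, 2, 3) by the sequence □_{(k)}. Then φ is D2⊕⊆K-satisfiable if and only if φ^{m} is satisfiable in some Kripke model over a frame in C. -/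
/-- `D2⊕⊆K`-satisfiability. -/
def D2KSat (φ : MF (Fin 3) ℕ) : Prop :=
  ∃ (W : Type) (R : Fin 3 → W → W → Prop) (V : ℕ → Set W) (w : W),
    Serial (R 0) ∧ Serial (R 1) ∧
    (∀ a b, R 0 a b ∨ R 1 a b → R 2 a b) ∧
    Sat R V w φ

/-- The translation replacing (with modalities `x, y, j, i` coded as
`0, 1, 2, 3 : Fin 4`) `□_1` by `□_x□_j`, `□_2` by `□_y□_j`, and `□_3` by `□_i□_j`. -/
def tr18 : MF (Fin 3) ℕ → MF (Fin 4) ℕ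
  | .var p  => .var p
  | .nvar p => .nvar p
  | .bot    => .bot
  | .top    => .top
  | .and φ ψ => .and (tr18 φ) (tr18 ψ)
  | .or φ ψ  => .or (tr18 φ) (tr18 ψ)
  | .box k ψ =>
      if k = 0 then .box 0 (.box 2 (tr18 ψ))
      else if k = 1 then .box 1 (.box 2 (tr18 ψ))
      else .box 3 (.box 2 (tr18 ψ))
  | .dia k ψ =>
      if k = 0 then .dia 0 (.dia 2 (tr18 ψ))
      else if k = 1 then .dia 1 (.dia 2 (tr18 ψ))
      else .dia 3 (.dia 2 (tr18 ψ))

/-- The index of the modality among `x, y, i` (coded `0, 1, 3`) that begins the translation of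
the `k`-th box. -/
def firstMod (k : Fin 3) : Fin 4 := if k = 0 then 0 else if k = 1 then 1 else 3

theorem tr18_box (k : Fin 3) (ψ : MF (Fin 3) ℕ) :
    tr18 (.box k ψ) = .box (firstMod k) (.box 2 (tr18 ψ)) := by
  fin_cases k <;> rfl

theorem tr18_dia (k : Fin 3) (ψ : MF (Fin 3) ℕ) :
    tr18 (.dia k ψ) = .dia (firstMod k) (.dia 2 (tr18 ψ)) := by
  fin_cases k <;> rfl

/-- The trimodal relations obtained by composing `R_x`, `R_y`, `R_i` with `R_j`. -/
def compRel {W : Type} (R : Fin 4 → W → W → Prop) (k : Fin 3) (w v : W) : Prop :=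
  ∃ u, R (firstMod k) w u ∧ R 2 u v

theorem sat_compRel {W : Type} (R : Fin 4 → W → W → Prop) (V : ℕ → Set W) (φ : MF (Fin 3) ℕ) :
    ∀ w, Sat (compRel R) V w φ ↔ Sat R V w (tr18 φ) := by
  induction φ with
  | var p => exact fun w => Iff.rfl
  | nvar p => exact fun w => Iff.rfl
  | bot => exact fun w => Iff.rfl
  | top => exact fun w => Iff.rfl
  | and φ ψ ih₁ ih₂ => exact fun w => and_congr (ih₁ w) (ih₂ w)
  | or φ ψ ih₁ ih₂ => exact fun w => or_congr (ih₁ w) (ih₂ w)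
  | box k ψ ih =>
    intro w
    rw [tr18_box]
    simp only [Sat, compRel, ih]
    exact ⟨fun h u hu v hv => h v ⟨u, hu, hv⟩, fun h v ⟨u, hu, hv⟩ => h u hu v hv⟩
  | dia k ψ ih =>
    intro w
    rw [tr18_dia]
    simp only [Sat, compRel, ih]
    exact ⟨fun ⟨v, ⟨u, hu, hv⟩, h⟩ => ⟨u, hu, v, hv, h⟩,
      fun ⟨u, hu, v, hv, h⟩ => ⟨v, ⟨u, hu, hv⟩, h⟩⟩

/-- One of the relations `R_x`, `R_y`, `R_i` of the subdivided frame, built from the trimodal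
relation `S`. Worlds `Sum.inl w` are the original ones and `Sum.inr w` their intermediate copies;
each intermediate copy is related to itself only. -/
def stepRel {W : Type} (S : W → W → Prop) : W ⊕ W → W ⊕ W → Prop
  | .inl w, .inr v => S w v
  | .inr u, .inr v => u = v
  | _, .inl _ => False

/-- The relation `R_j` of the subdivided frame: both copies of `v` see exactly the original `v`. -/
def returnRel {W : Type} : W ⊕ W → W ⊕ W → Prop
  | .inl u, .inl v => u = v
  | .inr u, .inl v => u = v
  | _, .inr _ => False

/-- The four relations, in the order `x, y, j, i`, of the frame in which every edge of the
trimodal frame is subdivided. -/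
def splitRel {W : Type} (R : Fin 3 → W → W → Prop) : Fin 4 → W ⊕ W → W ⊕ W → Prop :=
  ![stepRel (R 0), stepRel (R 1), returnRel, stepRel (R 2)]

theorem splitRel_firstMod {W : Type} (R : Fin 3 → W → W → Prop) (k : Fin 3) :
    splitRel R (firstMod k) = stepRel (R k) := by
  fin_cases k <;> rfl

theorem serial_stepRel {W : Type} {S : W → W → Prop} (hS : Serial S) : Serial (stepRel S)
  | .inl w => let ⟨v, hv⟩ := hS w; ⟨.inr v, hv⟩
  | .inr w => ⟨.inr w, rfl⟩

theorem transitive_stepRel {W : Type} (S : W → W → Prop) : Transitive (stepRel S) := by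
  rintro (a | a) (b | b) (c | c) hab hbc <;> simp_all [stepRel]

theorem stepRel_mono {W : Type} {S T : W → W → Prop} (h : ∀ a b, S a b → T a b) :
    ∀ a b, stepRel S a b → stepRel T a b := by
  rintro (a | a) (b | b) hab <;> simp_all [stepRel]

theorem serial_returnRel {W : Type} : Serial (returnRel (W := W))
  | .inl w => ⟨.inl w, rfl⟩
  | .inr w => ⟨.inl w, rfl⟩

/-- The original frame is recovered from the subdivided one by composing with `R_j`. -/
theorem compRel_splitRel {W : Type} (R : Fin 3 → W → W → Prop) (k : Fin 3) (w : W) (v : W ⊕ W) :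
    compRel (splitRel R) k (.inl w) v ↔ ∃ u, v = .inl u ∧ R k w u := by
  have h2 : splitRel R 2 = returnRel := rfl
  rcases v with v | v <;> simp [compRel, splitRel_firstMod, h2, stepRel, returnRel]

theorem sat_splitRel {W : Type} (R : Fin 3 → W → W → Prop) (V : ℕ → Set W)
    (φ : MF (Fin 3) ℕ) (w : W) :
    Sat R V w φ ↔ Sat (splitRel R) (fun p => Set.image Sum.inl (V p)) (.inl w) (tr18 φ) := by
  rw [← sat_compRel]
  induction φ generalizing w with
  | var p => simp [Sat]
  | nvar p => simp [Sat]
  | bot => exact Iff.rfl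
  | top => exact Iff.rfl
  | and φ ψ ih₁ ih₂ => exact and_congr (ih₁ w) (ih₂ w)
  | or φ ψ ih₁ ih₂ => exact or_congr (ih₁ w) (ih₂ w)
  | box k ψ ih => simp [Sat, compRel_splitRel, ih]
  | dia k ψ ih => simp [Sat, compRel_splitRel, ih]

/-- A diamond-free trimodal NNF formula `φ` is D2⊕⊆K-satisfiable
iff `φ^m` is satisfiable over a frame `(W, R_x, R_y, R_j, R_i)` in which `R_x`
and `R_y` are serial and transitive, `R_j` is serial, and `R_x ∪ R_y ⊆ R_i`. -/
theorem stmt_18 (φ : MF (Fin 3) ℕ) (hdf : DiamondFree φ) :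
    D2KSat φ ↔
      ∃ (W : Type) (R : Fin 4 → W → W → Prop) (V : ℕ → Set W) (w : W),
        Serial (R 0) ∧ Transitive (R 0) ∧
        Serial (R 1) ∧ Transitive (R 1) ∧
        Serial (R 2) ∧
        (∀ a b, R 0 a b ∨ R 1 a b → R 3 a b) ∧
        Sat R V w (tr18 φ) := by
  constructor
  · rintro ⟨W, R, V, w, h0, h1, hsub, hw⟩
    refine ⟨W ⊕ W, splitRel R, fun p => Set.image Sum.inl (V p), .inl w, serial_stepRel h0,
      transitive_stepRel _, serial_stepRel h1, transitive_stepRel _, serial_returnRel, ?_,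
      (sat_splitRel R V φ w).1 hw⟩
    rintro a b (h | h)
    · exact stepRel_mono (fun a b hab => hsub a b (Or.inl hab)) a b h
    · exact stepRel_mono (fun a b hab => hsub a b (Or.inr hab)) a b h
  · rintro ⟨W, R, V, w, h0, -, h1, -, h2, hsub, hw⟩
    refine ⟨W, compRel R, V, w, fun a => ?_, fun a => ?_, ?_, (sat_compRel R V φ w).2 hw⟩
    · obtain ⟨u, hu⟩ := h0 a
      obtain ⟨v, hv⟩ := h2 u
      exact ⟨v, u, hu, hv⟩
    · obtain ⟨u, hu⟩ := h1 a
      obtain ⟨v, hv⟩ := h2 u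
      exact ⟨v, u, hu, hv⟩
    · rintro a b (⟨u, hu, hv⟩ | ⟨u, hu, hv⟩)
      · exact ⟨u, hsub a u (Or.inl hu), hv⟩
      · exact ⟨u, hsub a u (Or.inr hu), hv⟩
end
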